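/- Fix δ ∈ (0,1). Suppose strong concentrability holds: d^π(s)/d^D(s) ≤ B_{w,u} for every policy π and state s, and d*_0(s)/d^D(s) ≥ B_{w,l} > 0 for every state s, for some optimal occupancy d*_0. Suppose also d*_0/d^D ≤ B_{w,0} pointwise, v*_0 ∈ V, w*_0 ∈ W, 0 ≤ w ≤ B_{w,0} for all w ∈ W, every w ∈ W satisfies Σ_a π_D(a|s)w(s,a) ≥ B_{w,l} for all s, and 0 ≤ v(s) ≤ 1/(1−γ) for all v ∈ V and s. Then with probability at least 1−δ, PRO-RL with input α = 0 outputs π̂ with J(π*_0) − J(π̂) ≤ (2·B_{w,0}·B_{w,u}/((1−γ)·B_{w,l}))·√(2·log(4|V||W|/δ)/n) + (B_{w,u}/B_{w,l})·√(2·log(4|V|/δ)/n0). -/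

import Mathlib

open MeasureTheory
open scoped BigOperators ENNReal

namespace ProRL

/-- The discrete measure on a type induced by a real-valued weight function. -/
noncomputable def discMeasure {X : Type*} [MeasurableSpace X] (p : X → ℝ) : Measure X :=
  Measure.sum fun x => ENNReal.ofReal (p x) • Measure.dirac x

variable {S A : Type*} [Fintype S] [Fintype A]

/-- The `t`-step state-action distribution of policy `π` started from `μ0`. -/
noncomputable def saDist (P : S → A → S → ℝ) (μ0 : S → ℝ) (π : S → A → ℝ) :
    ℕ → S → A → ℝ
  | 0 => fun s a => μ0 s * π s a
  | t + 1 => fun s a =>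
      (∑ s' : S, ∑ a' : A, saDist P μ0 π t s' a' * P s' a' s) * π s a

/-- The discounted state-action occupancy `d^π(s,a)`. -/
noncomputable def occ (P : S → A → S → ℝ) (μ0 : S → ℝ) (γ : ℝ) (π : S → A → ℝ)
    (s : S) (a : A) : ℝ :=
  (1 - γ) * ∑' t : ℕ, γ ^ t * saDist P μ0 π t s a

/-- The (normalized) expected discounted return `J(π) = E_{d^π}[r]`. -/
noncomputable def Jret (P : S → A → S → ℝ) (r : S → A → ℝ) (μ0 : S → ℝ) (γ : ℝ)
    (π : S → A → ℝ) : ℝ :=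
  ∑ s : S, ∑ a : A, occ P μ0 γ π s a * r s a

/-- `π` is a (stationary, stochastic) policy. -/
def IsPolicy (π : S → A → ℝ) : Prop :=
  (∀ s a, 0 ≤ π s a) ∧ ∀ s, ∑ a : A, π s a = 1

/-- The Bellman residual `e_v(s,a) = r(s,a) + γ ∑_{s'} P(s'|s,a) v(s') − v(s)`. -/
noncomputable def eV (P : S → A → S → ℝ) (r : S → A → ℝ) (γ : ℝ) (v : S → ℝ)
    (s : S) (a : A) : ℝ :=
  r s a + γ * ∑ s' : S, P s a s' * v s' - v s

/-- The population Lagrangian `L_α(v,w)`. -/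
noncomputable def Lag (P : S → A → S → ℝ) (r : S → A → ℝ) (μ0 : S → ℝ) (γ : ℝ)
    (dD : S → A → ℝ) (f : ℝ → ℝ) (α : ℝ) (v : S → ℝ) (w : S → A → ℝ) : ℝ :=
  (1 - γ) * ∑ s : S, μ0 s * v s
    - α * ∑ s : S, ∑ a : A, dD s a * f (w s a)
    + ∑ s : S, ∑ a : A, dD s a * (w s a * eV P r γ v s a)

/-- The empirical Lagrangian `L̂_α(v,w)` built from the transition dataset `D`
(`D i = ((sᵢ,aᵢ), s'ᵢ)`, with `rᵢ = r sᵢ aᵢ`) and initial-state dataset `D0`. -/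
noncomputable def empLag (r : S → A → ℝ) (γ : ℝ) (f : ℝ → ℝ) (α : ℝ) {n n0 : ℕ}
    (D : Fin n → (S × A) × S) (D0 : Fin n0 → S) (v : S → ℝ) (w : S → A → ℝ) : ℝ :=
  (1 - γ) * ((n0 : ℝ)⁻¹ * ∑ j : Fin n0, v (D0 j))
    - α * ((n : ℝ)⁻¹ * ∑ i : Fin n, f (w (D i).1.1 (D i).1.2))
    + (n : ℝ)⁻¹ * ∑ i : Fin n,
        w (D i).1.1 (D i).1.2 *
          (r (D i).1.1 (D i).1.2 + γ * v (D i).2 - v (D i).1.1)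

/-- Per-state normalization of a state-action weight into a policy
(uniform where the state marginal is not positive). -/
noncomputable def normPolicy (d : S → A → ℝ) (s : S) (a : A) : ℝ :=
  if 0 < ∑ a' : A, d s a' then d s a / ∑ a' : A, d s a'
  else (Fintype.card A : ℝ)⁻¹

/-- Policy extraction from a density ratio `w` and a behavior policy `piD`
(uniform where the normalizer vanishes). -/
noncomputable def extractPolicy (piD w : S → A → ℝ) (s : S) (a : A) : ℝ :=
  if 0 < ∑ a' : A, w s a' * piD s a' then
    w s a * piD s a / ∑ a' : A, w s a' * piD s a'
  else (Fintype.card A : ℝ)⁻¹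

/-- Behavior policy `π_D(a|s)` obtained from the data distribution `d^D`. -/
noncomputable def behPolicy (dD : S → A → ℝ) : S → A → ℝ := normPolicy dD

/-- The state-action measure `d(s,a) = w(s,a)·d^D(s,a)`. -/
noncomputable def dstar (dD w : S → A → ℝ) : S → A → ℝ := fun s a => w s a * dD s a

/-- The weighted `L²(d^D)` norm of a state-action function. -/
noncomputable def l2nrm (dD g : S → A → ℝ) : ℝ :=
  Real.sqrt (∑ s : S, ∑ a : A, dD s a * g s a ^ 2)

/-- `‖π(·|s) − π'(·|s)‖₁`. -/
noncomputable def l1Pol (π π' : S → A → ℝ) (s : S) : ℝ := ∑ a : A, |π s a - π' s a|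

/-- `E_{s ∼ d}[‖π(·|s) − π'(·|s)‖₁]` where `d` is a state-action distribution. -/
noncomputable def expL1 (d π π' : S → A → ℝ) : ℝ :=
  ∑ s : S, (∑ a : A, d s a) * l1Pol π π' s

/-- The statistical error term `ε_stat`. -/
noncomputable def epsStat (γ α Bv Bf Bw Be δ : ℝ) (nV nW n n0 : ℕ) : ℝ :=
  (1 - γ) * Bv * Real.sqrt (2 * Real.log (4 * (nV : ℝ) / δ) / (n0 : ℝ))
    + (α * Bf + Bw * Be) *
        Real.sqrt (2 * Real.log (4 * ((nV : ℝ) * (nW : ℝ)) / δ) / (n : ℝ))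

/-- The Bellman flow equations for a state-action measure `d`. -/
def BellmanFlow (P : S → A → S → ℝ) (μ0 : S → ℝ) (γ : ℝ) (d : S → A → ℝ) : Prop :=
  ∀ s : S, ∑ a : A, d s a
    = (1 - γ) * μ0 s + γ * ∑ s' : S, ∑ a' : A, P s' a' s * d s' a'

/-- `(v,w)` is a saddle point of `max_{w ≥ 0} min_v L_α(v,w)`. -/
def IsSaddle (P : S → A → S → ℝ) (r : S → A → ℝ) (μ0 : S → ℝ) (γ : ℝ)
    (dD : S → A → ℝ) (f : ℝ → ℝ) (α : ℝ) (v : S → ℝ) (w : S → A → ℝ) : Prop :=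
  (∀ s a, 0 ≤ w s a) ∧
  (∀ v' : S → ℝ, Lag P r μ0 γ dD f α v w ≤ Lag P r μ0 γ dD f α v' w) ∧
  (∀ w' : S → A → ℝ, (∀ s a, 0 ≤ w' s a) →
    Lag P r μ0 γ dD f α v w' ≤ Lag P r μ0 γ dD f α v w)

/-- `(v,w)` is a saddle point of `max_{0 ≤ w ≤ Bw} min_v L_α(v,w)` (constrained LP). -/
def IsSaddleB (P : S → A → S → ℝ) (r : S → A → ℝ) (μ0 : S → ℝ) (γ : ℝ)
    (dD : S → A → ℝ) (f : ℝ → ℝ) (α Bw : ℝ) (v : S → ℝ) (w : S → A → ℝ) : Prop :=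
  (∀ s a, 0 ≤ w s a ∧ w s a ≤ Bw) ∧
  (∀ v' : S → ℝ, Lag P r μ0 γ dD f α v w ≤ Lag P r μ0 γ dD f α v' w) ∧
  (∀ w' : S → A → ℝ, (∀ s a, 0 ≤ w' s a ∧ w' s a ≤ Bw) →
    Lag P r μ0 γ dD f α v w' ≤ Lag P r μ0 γ dD f α v w)

/-- `(vhat, what)` is an exact max-min point of the empirical Lagrangian over `V × W`:
`vhat ∈ argmin_{v ∈ V} L̂(v, what)` and `what ∈ argmax_{w ∈ W} min_{v ∈ V} L̂(v, w)`. -/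
def IsProRLOutput (r : S → A → ℝ) (γ : ℝ) (f : ℝ → ℝ) (α : ℝ)
    (V : Finset (S → ℝ)) (W : Finset (S → A → ℝ)) {n n0 : ℕ}
    (D : Fin n → (S × A) × S) (D0 : Fin n0 → S)
    (vhat : S → ℝ) (what : S → A → ℝ) : Prop :=
  vhat ∈ V ∧ what ∈ W ∧
  (∀ v ∈ V, empLag r γ f α D D0 vhat what ≤ empLag r γ f α D D0 v what) ∧
  ∀ w ∈ W, ∀ vw ∈ V,
    (∀ v ∈ V, empLag r γ f α D D0 vw w ≤ empLag r γ f α D D0 v w) →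
      empLag r γ f α D D0 vw w ≤ empLag r γ f α D D0 vhat what

/-- Weight of a transition tuple `((s,a),s')` under `(s,a) ∼ d^D`, `s' ∼ P(·|s,a)`. -/
noncomputable def tupleWeight (P : S → A → S → ℝ) (dD : S → A → ℝ)
    (x : (S × A) × S) : ℝ :=
  dD x.1.1 x.1.2 * P x.1.1 x.1.2 x.2

/-- The joint law of the transition dataset `D` (i.i.d. from `d^D ⊗ P`) and the
initial-state dataset `D0` (i.i.d. from `μ0`). -/
noncomputable def dataMeasure [MeasurableSpace S] [MeasurableSpace A]
    (P : S → A → S → ℝ) (dD : S → A → ℝ) (μ0 : S → ℝ) (n n0 : ℕ) :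
    Measure ((Fin n → (S × A) × S) × (Fin n0 → S)) :=
  (Measure.pi fun _ : Fin n => discMeasure (tupleWeight P dD)).prod
    (Measure.pi fun _ : Fin n0 => discMeasure μ0)

/-- The joint law of datasets `D1`, `D2` (both i.i.d. from `d^D ⊗ P`) and `D0`
(i.i.d. from `μ0`), used by PRO-RL-BC. -/
noncomputable def dataMeasure3 [MeasurableSpace S] [MeasurableSpace A]
    (P : S → A → S → ℝ) (dD : S → A → ℝ) (μ0 : S → ℝ) (n1 n2 n0 : ℕ) :
    Measure ((Fin n1 → (S × A) × S) × (Fin n2 → (S × A) × S) × (Fin n0 → S)) :=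
  (Measure.pi fun _ : Fin n1 => discMeasure (tupleWeight P dD)).prod
    ((Measure.pi fun _ : Fin n2 => discMeasure (tupleWeight P dD)).prod
      (Measure.pi fun _ : Fin n0 => discMeasure μ0))

/-- `v` is the optimal value function: it satisfies the Bellman optimality equation. -/
def IsOptValue [Nonempty A] (P : S → A → S → ℝ) (r : S → A → ℝ) (γ : ℝ)
    (v : S → ℝ) : Prop :=
  ∀ s : S, v s = Finset.univ.sup' Finset.univ_nonempty
    (fun a : A => r s a + γ * ∑ s' : S, P s a s' * v s')

/-- Basic assumptions on the MDP, the regularizer-free data, and the data distribution. -/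
structure MDPAssumptions (P : S → A → S → ℝ) (r : S → A → ℝ) (μ0 : S → ℝ) (γ : ℝ)
    (dD : S → A → ℝ) : Prop where
  P_nonneg : ∀ s a s', 0 ≤ P s a s'
  P_sum : ∀ s a, ∑ s' : S, P s a s' = 1
  r_nonneg : ∀ s a, 0 ≤ r s a
  r_le_one : ∀ s a, r s a ≤ 1
  γ_nonneg : 0 ≤ γ
  γ_lt_one : γ < 1
  μ0_pos : ∀ s, 0 < μ0 s
  μ0_sum : ∑ s : S, μ0 s = 1
  dD_nonneg : ∀ s a, 0 ≤ dD s a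
  dD_sum : ∑ s : S, ∑ a : A, dD s a = 1

/-- Regularity of the regularizer `f`: continuously differentiable with derivative `f'`,
`M_f`-strongly convex, and with `|f'| ≤ Bf'`, `|f| ≤ Bf` on `[0, Bw]`. -/
structure RegAssumptions (f f' : ℝ → ℝ) (Mf Bw Bf' Bf : ℝ) : Prop where
  deriv : ∀ x, HasDerivAt f (f' x) x
  strong : StrongConvexOn Set.univ Mf f
  Mf_pos : 0 < Mf
  f'_bdd : ∀ x, 0 ≤ x → x ≤ Bw → |f' x| ≤ Bf'
  f_bdd : ∀ x, 0 ≤ x → x ≤ Bw → |f x| ≤ Bf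

/-- `w` is an optimal density ratio of the unregularized LP (the set `W*₀`). -/
def OptRatio (P : S → A → S → ℝ) (r : S → A → ℝ) (μ0 : S → ℝ) (γ : ℝ)
    (dD : S → A → ℝ) (w : S → A → ℝ) : Prop :=
  (∀ s a, 0 ≤ w s a) ∧ BellmanFlow P μ0 γ (dstar dD w) ∧
  ∀ w' : S → A → ℝ, (∀ s a, 0 ≤ w' s a) → BellmanFlow P μ0 γ (dstar dD w') →
    ∑ s : S, ∑ a : A, dstar dD w' s a * r s a
      ≤ ∑ s : S, ∑ a : A, dstar dD w s a * r s a

section Concentration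

open ProbabilityTheory

lemma discMeasure_singleton {X : Type*} [Fintype X] [MeasurableSpace X]
    [MeasurableSingletonClass X] (p : X → ℝ) (x : X) :
    discMeasure p {x} = ENNReal.ofReal (p x) := by
  classical
  rw [discMeasure, Measure.sum_apply _ (measurableSet_singleton x), tsum_fintype,
    Finset.sum_eq_single x]
  · simp
  · intro y _ hyx
    simp [hyx]
  · simp

lemma isProbabilityMeasure_discMeasure {X : Type*} [Fintype X] [MeasurableSpace X]
    (p : X → ℝ) (hp : ∀ x, 0 ≤ p x) (hsum : ∑ x, p x = 1) :
    IsProbabilityMeasure (discMeasure p) := by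
  constructor
  rw [discMeasure, Measure.sum_apply _ MeasurableSet.univ, tsum_fintype]
  simp only [Measure.smul_apply, measure_univ, smul_eq_mul, mul_one]
  rw [← ENNReal.ofReal_sum_of_nonneg fun x _ => hp x, hsum, ENNReal.ofReal_one]

lemma integral_discMeasure {X : Type*} [Fintype X] [MeasurableSpace X]
    [MeasurableSingletonClass X] (p : X → ℝ) (hp : ∀ x, 0 ≤ p x) (hsum : ∑ x, p x = 1)
    (g : X → ℝ) : ∫ x, g x ∂discMeasure p = ∑ x, p x * g x := by
  have := isProbabilityMeasure_discMeasure p hp hsum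
  rw [integral_fintype Integrable.of_finite]
  refine Finset.sum_congr rfl fun x _ => ?_
  rw [measureReal_def, discMeasure_singleton, ENNReal.toReal_ofReal (hp x), smul_eq_mul]

/-- One-sided Hoeffding inequality for the sum of i.i.d. copies of a bounded function. -/
lemma hoeffding_sum_ge_le {X : Type*} [MeasurableSpace X] (μ : Measure X)
    [IsProbabilityMeasure μ] {g : X → ℝ} (hg : Measurable g) {a b : ℝ}
    (hb : ∀ x, g x ∈ Set.Icc a b) (n : ℕ) {ε : ℝ} (hε : 0 ≤ ε) :
    (Measure.pi fun _ : Fin n => μ).real {x | ε ≤ ∑ i, (g (x i) - ∫ y, g y ∂μ)}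
      ≤ Real.exp (-ε ^ 2 / (2 * (n * ((b - a) / 2) ^ 2))) := by
  have hind : iIndepFun (fun (i : Fin n) (x : Fin n → X) => g (x i) - ∫ y, g y ∂μ)
      (Measure.pi fun _ : Fin n => μ) :=
    iIndepFun_pi (X := fun _ y => g y - ∫ y, g y ∂μ) fun _ => (hg.sub_const _).aemeasurable
  have hsub : ∀ i ∈ (Finset.univ : Finset (Fin n)),
      HasSubgaussianMGF (fun x : Fin n → X => g (x i) - ∫ y, g y ∂μ)
        ((‖b - a‖₊ / 2) ^ 2) (Measure.pi fun _ : Fin n => μ) := by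
    intro i _
    have h := hasSubgaussianMGF_of_mem_Icc (μ := Measure.pi fun _ : Fin n => μ)
      (X := fun x : Fin n → X => g (x i)) (a := a) (b := b)
      (hg.comp (measurable_pi_apply i)).aemeasurable (.of_forall fun x => hb (x i))
    rwa [integral_comp_eval (μ := fun _ : Fin n => μ) hg.aestronglyMeasurable] at h
  have h := HasSubgaussianMGF.measure_sum_ge_le_of_iIndepFun hind hsub hε
  simpa [div_pow] using h

/-- Two-sided Hoeffding inequality at a prescribed confidence level. -/
lemma hoeffding_mean {X : Type*} [MeasurableSpace X] (μ : Measure X)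
    [IsProbabilityMeasure μ] {g : X → ℝ} (hg : Measurable g) {a b : ℝ} (hab : a < b)
    (hb : ∀ x, g x ∈ Set.Icc a b) {n : ℕ} (hn : 0 < n) {p : ℝ} (hp : 0 < p) (hp1 : p ≤ 1) :
    (Measure.pi fun _ : Fin n => μ)
        {x | (b - a) / 2 * Real.sqrt (2 * Real.log p⁻¹ / n)
          < |(n : ℝ)⁻¹ * ∑ i, g (x i) - ∫ y, g y ∂μ|}
      ≤ ENNReal.ofReal (2 * p) := by
  have hn' : (0 : ℝ) < n := by exact_mod_cast hn
  have hlog : 0 ≤ Real.log p⁻¹ := Real.log_nonneg ((one_le_inv₀ hp).2 hp1)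
  set t := (b - a) / 2 * Real.sqrt (2 * Real.log p⁻¹ / n) with ht
  have ht0 : 0 ≤ t := mul_nonneg (by linarith) (Real.sqrt_nonneg _)
  have hexp : Real.exp (-(n * t) ^ 2 / (2 * (n * ((b - a) / 2) ^ 2))) = p := by
    have hba : b - a ≠ 0 := by linarith
    have : -(n * t) ^ 2 / (2 * (n * ((b - a) / 2) ^ 2)) = -Real.log p⁻¹ := by
      rw [ht, mul_pow, mul_pow, Real.sq_sqrt (by positivity)]
      field_simp
    rw [this, Real.log_inv, neg_neg, Real.exp_log hp]
  have hup := hoeffding_sum_ge_le μ hg hb n (mul_nonneg hn'.le ht0)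
  have hlow := hoeffding_sum_ge_le μ hg.neg (a := -b) (b := -a)
    (fun x => ⟨neg_le_neg (hb x).2, neg_le_neg (hb x).1⟩) n (mul_nonneg hn'.le ht0)
  rw [show -a - -b = b - a by ring, hexp] at hlow
  rw [hexp] at hup
  rw [← ofReal_measureReal]
  refine ENNReal.ofReal_le_ofReal ?_
  refine (measureReal_mono (s₂ := {x | n * t ≤ ∑ i, (g (x i) - ∫ y, g y ∂μ)} ∪
    {x | n * t ≤ ∑ i, ((-g) (x i) - ∫ y, (-g) y ∂μ)}) ?_).trans
    ((measureReal_union_le _ _).trans (by linarith))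
  intro x hx
  have hsum : ∑ i, (g (x i) - ∫ y, g y ∂μ)
      = n * ((n : ℝ)⁻¹ * ∑ i, g (x i) - ∫ y, g y ∂μ) := by
    simp only [Finset.sum_sub_distrib, Finset.sum_const, Finset.card_univ, Fintype.card_fin,
      nsmul_eq_mul]
    field_simp
  have hsum' : ∑ i, ((-g) (x i) - ∫ y, (-g) y ∂μ)
      = -∑ i, (g (x i) - ∫ y, g y ∂μ) := by
    rw [← Finset.sum_neg_distrib]
    refine Finset.sum_congr rfl fun i _ => ?_
    simp only [Pi.neg_apply, integral_neg]
    ring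
  simp only [Set.mem_union, Set.mem_ofPred_eq] at hx ⊢
  rw [hsum', hsum, ← mul_neg]
  rcases lt_abs.1 hx with h | h
  · exact Or.inl (mul_le_mul_of_nonneg_left h.le hn'.le)
  · exact Or.inr (mul_le_mul_of_nonneg_left h.le hn'.le)

/-- Uniform concentration of empirical means over a finite class of bounded functions. -/
lemma uniform_hoeffding {X ι : Type*} [MeasurableSpace X] (μ : Measure X)
    [IsProbabilityMeasure μ] (F : Finset ι) (hF : F.Nonempty) {g : ι → X → ℝ}
    (hg : ∀ k, Measurable (g k)) {a b : ℝ} (hab : a < b)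
    (hb : ∀ k ∈ F, ∀ x, g k x ∈ Set.Icc a b) {n : ℕ} (hn : 0 < n)
    {δ : ℝ} (hδ0 : 0 < δ) (hδ1 : δ < 1) :
    (Measure.pi fun _ : Fin n => μ)
        {x | ∃ k ∈ F, (b - a) / 2 * Real.sqrt (2 * Real.log (4 * (F.card : ℝ) / δ) / n)
          < |(n : ℝ)⁻¹ * ∑ i, g k (x i) - ∫ y, g k y ∂μ|}
      ≤ ENNReal.ofReal (δ / 2) := by
  have hcard : (1 : ℝ) ≤ F.card := by exact_mod_cast hF.card_pos
  have hp : 0 < δ / (4 * (F.card : ℝ)) := by positivity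
  have hp1 : δ / (4 * (F.card : ℝ)) ≤ 1 := (div_le_one (by positivity)).2 (by linarith)
  have heq : {x : Fin n → X | ∃ k ∈ F,
      (b - a) / 2 * Real.sqrt (2 * Real.log (4 * (F.card : ℝ) / δ) / n)
          < |(n : ℝ)⁻¹ * ∑ i, g k (x i) - ∫ y, g k y ∂μ|}
      = ⋃ k ∈ F, {x | (b - a) / 2 * Real.sqrt (2 * Real.log (4 * (F.card : ℝ) / δ) / n)
          < |(n : ℝ)⁻¹ * ∑ i, g k (x i) - ∫ y, g k y ∂μ|} := by
    ext x
    simp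
  rw [heq]
  calc _ ≤ ∑ k ∈ F, _ := measure_biUnion_finset_le _ _
    _ ≤ ∑ _k ∈ F, ENNReal.ofReal (2 * (δ / (4 * (F.card : ℝ)))) := by
        refine Finset.sum_le_sum fun k hk => ?_
        have h := hoeffding_mean μ (hg k) hab (hb k hk) hn hp hp1
        rwa [inv_div] at h
    _ = ENNReal.ofReal (δ / 2) := by
        rw [← ENNReal.ofReal_sum_of_nonneg fun _ _ => by positivity, Finset.sum_const,
          nsmul_eq_mul]
        congr 1
        field_simp
        norm_num

end Concentration

section Occupancy

variable {P : S → A → S → ℝ} {r : S → A → ℝ} {μ0 : S → ℝ} {γ : ℝ} {dD π : S → A → ℝ}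

lemma saDist_nonneg (hM : MDPAssumptions P r μ0 γ dD) (hπ : IsPolicy π) (t : ℕ) (s : S)
    (a : A) : 0 ≤ saDist P μ0 π t s a := by
  induction t generalizing s a with
  | zero => exact mul_nonneg (hM.μ0_pos s).le (hπ.1 s a)
  | succ t ih =>
    exact mul_nonneg (Finset.sum_nonneg fun s' _ => Finset.sum_nonneg fun a' _ =>
      mul_nonneg (ih s' a') (hM.P_nonneg s' a' s)) (hπ.1 s a)

lemma sum_saDist_zero (hπ : IsPolicy π) (s : S) :
    ∑ a, saDist P μ0 π 0 s a = μ0 s := by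
  simp only [saDist, ← Finset.mul_sum, hπ.2 s, mul_one]

lemma sum_saDist_succ (hπ : IsPolicy π) (t : ℕ) (s : S) :
    ∑ a, saDist P μ0 π (t + 1) s a
      = ∑ s', ∑ a', saDist P μ0 π t s' a' * P s' a' s := by
  simp only [saDist, ← Finset.mul_sum, hπ.2 s, mul_one]

lemma saDist_eq_marginal_mul (hπ : IsPolicy π) (t : ℕ) (s : S) (a : A) :
    saDist P μ0 π t s a = (∑ a', saDist P μ0 π t s a') * π s a := by
  cases t with
  | zero => rw [sum_saDist_zero hπ, saDist]
  | succ t => rw [sum_saDist_succ hπ, saDist]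

lemma sum_saDist (hM : MDPAssumptions P r μ0 γ dD) (hπ : IsPolicy π) (t : ℕ) :
    ∑ s, ∑ a, saDist P μ0 π t s a = 1 := by
  induction t with
  | zero => simp only [sum_saDist_zero hπ, hM.μ0_sum]
  | succ t ih =>
    simp only [sum_saDist_succ hπ]
    rw [Finset.sum_comm, ← ih]
    refine Finset.sum_congr rfl fun s' _ => ?_
    rw [Finset.sum_comm]
    refine Finset.sum_congr rfl fun a' _ => ?_
    rw [← Finset.mul_sum, hM.P_sum, mul_one]

lemma saDist_le_one (hM : MDPAssumptions P r μ0 γ dD) (hπ : IsPolicy π) (t : ℕ) (s : S)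
    (a : A) : saDist P μ0 π t s a ≤ 1 := by
  rw [← sum_saDist hM hπ t]
  refine (Finset.single_le_sum (f := fun a => saDist P μ0 π t s a)
    (fun a _ => saDist_nonneg hM hπ t s a) (Finset.mem_univ a)).trans ?_
  exact Finset.single_le_sum (f := fun s => ∑ a, saDist P μ0 π t s a)
    (fun s _ => Finset.sum_nonneg fun a _ => saDist_nonneg hM hπ t s a) (Finset.mem_univ s)

lemma summable_discounted_saDist (hM : MDPAssumptions P r μ0 γ dD) (hπ : IsPolicy π) (s : S)
    (a : A) : Summable fun t : ℕ => γ ^ t * saDist P μ0 π t s a :=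
  Summable.of_nonneg_of_le
    (fun t => mul_nonneg (pow_nonneg hM.γ_nonneg t) (saDist_nonneg hM hπ t s a))
    (fun t => mul_le_of_le_one_right (pow_nonneg hM.γ_nonneg t) (saDist_le_one hM hπ t s a))
    (summable_geometric_of_lt_one hM.γ_nonneg hM.γ_lt_one)

lemma occ_nonneg (hM : MDPAssumptions P r μ0 γ dD) (hπ : IsPolicy π) (s : S) (a : A) :
    0 ≤ occ P μ0 γ π s a :=
  mul_nonneg (by linarith [hM.γ_lt_one]) (tsum_nonneg fun t =>
    mul_nonneg (pow_nonneg hM.γ_nonneg t) (saDist_nonneg hM hπ t s a))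

lemma sum_occ (hM : MDPAssumptions P r μ0 γ dD) (hπ : IsPolicy π) (s : S) :
    ∑ a, occ P μ0 γ π s a = (1 - γ) * ∑' t : ℕ, γ ^ t * ∑ a, saDist P μ0 π t s a := by
  simp only [occ, ← Finset.mul_sum]
  rw [← Summable.tsum_finsetSum fun a _ => summable_discounted_saDist hM hπ s a]
  simp only [Finset.mul_sum]

lemma occ_eq_marginal_mul (hM : MDPAssumptions P r μ0 γ dD) (hπ : IsPolicy π) (s : S) (a : A) :
    occ P μ0 γ π s a = (∑ a', occ P μ0 γ π s a') * π s a := by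
  rw [sum_occ hM hπ, mul_assoc, ← tsum_mul_right, occ]
  congr 1
  refine tsum_congr fun t => ?_
  rw [saDist_eq_marginal_mul hπ t s a, mul_assoc]

/-- Discounted occupancies satisfy the Bellman flow equations. -/
lemma bellmanFlow_occ (hM : MDPAssumptions P r μ0 γ dD) (hπ : IsPolicy π) :
    BellmanFlow P μ0 γ (occ P μ0 γ π) := by
  intro s
  have hsum : Summable fun t : ℕ => γ ^ t * ∑ a, saDist P μ0 π t s a := by
    simp only [Finset.mul_sum]
    exact summable_sum fun a _ => summable_discounted_saDist hM hπ s a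
  have hshift : ∑' t : ℕ, γ ^ t * ∑ s', ∑ a', saDist P μ0 π t s' a' * P s' a' s
      = ∑ s', ∑ a', P s' a' s * ∑' t : ℕ, γ ^ t * saDist P μ0 π t s' a' := by
    have hs : ∀ s' a', Summable fun t : ℕ =>
        P s' a' s * (γ ^ t * saDist P μ0 π t s' a') := fun s' a' =>
      (summable_discounted_saDist hM hπ s' a').mul_left _
    simp only [← tsum_mul_left]
    simp only [← Summable.tsum_finsetSum fun a' _ => hs _ a']
    rw [← Summable.tsum_finsetSum fun s' _ => summable_sum fun a' _ => hs s' a']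
    refine tsum_congr fun t => ?_
    simp only [Finset.mul_sum]
    exact Finset.sum_congr rfl fun s' _ => Finset.sum_congr rfl fun a' _ => by ring
  rw [sum_occ hM hπ, hsum.tsum_eq_zero_add, sum_saDist_zero hπ]
  simp only [sum_saDist_succ hπ, pow_succ', mul_assoc, tsum_mul_left, hshift]
  simp only [occ, Finset.mul_sum, mul_add, pow_zero, one_mul]
  congr 1
  exact Finset.sum_congr rfl fun s' _ => Finset.sum_congr rfl fun a' _ => by ring

/-- Under the Bellman flow equations the Lagrangian does not depend on the value function. -/
lemma sum_mul_eV_of_bellmanFlow {d : S → A → ℝ} (hd : BellmanFlow P μ0 γ d) (v : S → ℝ) :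
    (1 - γ) * ∑ s, μ0 s * v s + ∑ s, ∑ a, d s a * eV P r γ v s a
      = ∑ s, ∑ a, d s a * r s a := by
  have hexp : ∑ s, ∑ a, d s a * eV P r γ v s a
      = ∑ s, ∑ a, d s a * r s a
        + γ * ∑ s, ∑ a, d s a * ∑ s', P s a s' * v s' - ∑ s, (∑ a, d s a) * v s := by
    simp only [Finset.mul_sum (s := (Finset.univ : Finset S)) (a := γ), Finset.mul_sum (a := γ),
      Finset.sum_mul, ← Finset.sum_add_distrib, ← Finset.sum_sub_distrib]
    refine Finset.sum_congr rfl fun s _ => Finset.sum_congr rfl fun a _ => ?_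
    simp only [eV]
    ring
  have hswap : ∑ s, ∑ a, d s a * ∑ s', P s a s' * v s'
      = ∑ s, (∑ s', ∑ a', P s' a' s * d s' a') * v s := by
    simp only [Finset.mul_sum, Finset.sum_mul]
    rw [Finset.sum_comm (γ := S) (f := fun s s' => ∑ a', P s' a' s * d s' a' * v s)]
    refine Finset.sum_congr rfl fun s _ => ?_
    rw [Finset.sum_comm]
    exact Finset.sum_congr rfl fun s' _ => Finset.sum_congr rfl fun a _ => by ring
  have hflow : ∑ s, (∑ a, d s a) * v s
      = (1 - γ) * ∑ s, μ0 s * v s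
        + γ * ∑ s, (∑ s', ∑ a', P s' a' s * d s' a') * v s := by
    rw [Finset.mul_sum, Finset.mul_sum, ← Finset.sum_add_distrib]
    refine Finset.sum_congr rfl fun s _ => ?_
    rw [hd s]
    ring
  rw [hexp, hswap, hflow]
  ring

lemma Jret_eq (hM : MDPAssumptions P r μ0 γ dD) (hπ : IsPolicy π) (v : S → ℝ) :
    Jret P r μ0 γ π
      = (1 - γ) * ∑ s, μ0 s * v s + ∑ s, ∑ a, occ P μ0 γ π s a * eV P r γ v s a :=
  (sum_mul_eV_of_bellmanFlow (bellmanFlow_occ hM hπ) v).symm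

lemma sum_occ_pos (hM : MDPAssumptions P r μ0 γ dD) (hπ : IsPolicy π) (s : S) :
    0 < ∑ a, occ P μ0 γ π s a := by
  rw [bellmanFlow_occ hM hπ s]
  have h1 : 0 < (1 - γ) * μ0 s := mul_pos (by linarith [hM.γ_lt_one]) (hM.μ0_pos s)
  have h2 : 0 ≤ γ * ∑ s', ∑ a', P s' a' s * occ P μ0 γ π s' a' :=
    mul_nonneg hM.γ_nonneg (Finset.sum_nonneg fun s' _ => Finset.sum_nonneg fun a' _ =>
      mul_nonneg (hM.P_nonneg s' a' s) (occ_nonneg hM hπ s' a'))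
  linarith

variable [Nonempty A]

lemma IsOptValue.eV_nonpos {v : S → ℝ} (hv : IsOptValue P r γ v) (s : S) (a : A) :
    eV P r γ v s a ≤ 0 := by
  have h := Finset.le_sup' (fun a : A => r s a + γ * ∑ s' : S, P s a s' * v s')
    (Finset.mem_univ a)
  rw [← hv s] at h
  exact sub_nonpos.2 h

lemma IsOptValue.exists_eV_eq_zero {v : S → ℝ} (hv : IsOptValue P r γ v) (s : S) :
    ∃ a, eV P r γ v s a = 0 := by
  obtain ⟨a, -, ha⟩ := Finset.exists_mem_eq_sup' Finset.univ_nonempty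
    (fun a : A => r s a + γ * ∑ s' : S, P s a s' * v s')
  rw [← hv s] at ha
  exact ⟨a, sub_eq_zero.2 ha.symm⟩

/-- Some policy attains the return predicted by the optimal value function. -/
lemma IsOptValue.exists_policy (hM : MDPAssumptions P r μ0 γ dD) {v : S → ℝ}
    (hv : IsOptValue P r γ v) :
    ∃ π : S → A → ℝ, IsPolicy π ∧ Jret P r μ0 γ π = (1 - γ) * ∑ s, μ0 s * v s := by
  classical
  choose act hact using hv.exists_eV_eq_zero
  have hpol : IsPolicy fun s a => if a = act s then (1 : ℝ) else 0 :=
    ⟨fun s a => by positivity, fun s => by simp⟩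
  refine ⟨_, hpol, ?_⟩
  rw [Jret_eq hM hpol v, add_eq_left]
  refine Finset.sum_eq_zero fun s _ => Finset.sum_eq_zero fun a _ => ?_
  rw [occ_eq_marginal_mul hM hpol]
  by_cases h : a = act s
  · rw [h, hact, mul_zero]
  · simp [h]

/-- The occupancy of an optimal policy is complementary to the optimal Bellman residual. -/
lemma Jret_eq_of_optimal (hM : MDPAssumptions P r μ0 γ dD) (hπ : IsPolicy π)
    (hopt : ∀ π' : S → A → ℝ, IsPolicy π' → Jret P r μ0 γ π' ≤ Jret P r μ0 γ π)
    {v : S → ℝ} (hv : IsOptValue P r γ v) :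
    Jret P r μ0 γ π = (1 - γ) * ∑ s, μ0 s * v s := by
  obtain ⟨π', hπ', hJ⟩ := hv.exists_policy hM
  refine le_antisymm ?_ (hJ ▸ hopt π' hπ')
  rw [Jret_eq hM hπ v, add_le_iff_nonpos_right]
  exact Finset.sum_nonpos fun s _ => Finset.sum_nonpos fun a _ =>
    mul_nonpos_of_nonneg_of_nonpos (occ_nonneg hM hπ s a) (hv.eV_nonpos s a)

lemma isPolicy_extractPolicy {S A : Type*} [Fintype A] [Nonempty A]
    {piD w : S → A → ℝ} (hpiD : ∀ s a, 0 ≤ piD s a)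
    (hw : ∀ s a, 0 ≤ w s a) : IsPolicy (extractPolicy piD w) := by
  constructor
  · intro s a
    unfold extractPolicy
    split_ifs with h
    · exact div_nonneg (mul_nonneg (hw s a) (hpiD s a)) h.le
    · positivity
  · intro s
    unfold extractPolicy
    split_ifs with h
    · rw [← Finset.sum_div, div_self h.ne']
    · simp

lemma behPolicy_nonneg {S A : Type*} [Fintype A] {d : S → A → ℝ} (hd : ∀ s a, 0 ≤ d s a)
    (s : S) (a : A) :
    0 ≤ behPolicy d s a := by
  unfold behPolicy normPolicy
  split_ifs with h
  · exact div_nonneg (hd s a) h.le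
  · positivity

/-- Suboptimality of the extracted policy is controlled by the Lagrangian gap of the weight. -/
lemma suboptimality_le (hM : MDPAssumptions P r μ0 γ dD) {Bwu Bwl : ℝ} (hBwl : 0 < Bwl)
    (hconc : ∀ π : S → A → ℝ, IsPolicy π → ∀ s,
      (∑ a : A, occ P μ0 γ π s a) ≤ Bwu * ∑ a : A, dD s a)
    {v : S → ℝ} (hv : IsOptValue P r γ v) {w : S → A → ℝ} (hw : ∀ s a, 0 ≤ w s a)
    (hWgood : ∀ s, Bwl ≤ ∑ a : A, behPolicy dD s a * w s a) :
    (1 - γ) * ∑ s, μ0 s * v s - Jret P r μ0 γ (extractPolicy (behPolicy dD) w)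
      ≤ Bwu / Bwl * -∑ s, ∑ a, dD s a * (w s a * eV P r γ v s a) := by
  have hpol := isPolicy_extractPolicy (behPolicy_nonneg hM.dD_nonneg) hw
  set π' := extractPolicy (behPolicy dD) w with hπ'
  rw [Jret_eq hM hpol v, sub_add_cancel_left, ← Finset.sum_neg_distrib, ← Finset.sum_neg_distrib,
    Finset.mul_sum]
  refine Finset.sum_le_sum fun s _ => ?_
  rw [← Finset.sum_neg_distrib, ← Finset.sum_neg_distrib, Finset.mul_sum]
  refine Finset.sum_le_sum fun a _ => ?_
  have hpos := (sum_occ_pos hM hpol s).trans_le (hconc π' hpol s)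
  have hd0 : 0 ≤ ∑ a, dD s a := Finset.sum_nonneg fun a _ => hM.dD_nonneg s a
  have hd : 0 < ∑ a, dD s a := lt_of_le_of_ne hd0 fun h => by simp [← h] at hpos
  have hBwu : 0 ≤ Bwu := (pos_of_mul_pos_left hpos hd0).le
  have hbeh : behPolicy dD s a = dD s a / ∑ a', dD s a' := by
    simp only [behPolicy, normPolicy, if_pos hd]
  have hnorm : Bwl ≤ ∑ a', w s a' * behPolicy dD s a' := by
    simpa only [mul_comm] using hWgood s
  have hext : π' s a ≤ w s a * behPolicy dD s a / Bwl := by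
    rw [hπ', extractPolicy, if_pos (hBwl.trans_le hnorm)]
    exact div_le_div_of_nonneg_left
      (mul_nonneg (hw s a) (behPolicy_nonneg hM.dD_nonneg s a)) hBwl hnorm
  have hocc : occ P μ0 γ π' s a ≤ Bwu / Bwl * (dD s a * w s a) := by
    rw [occ_eq_marginal_mul hM hpol]
    refine (mul_le_mul (hconc π' hpol s) hext (hpol.1 s a) hpos.le).trans (le_of_eq ?_)
    rw [hbeh]
    field_simp
  have h := mul_le_mul_of_nonneg_right hocc (neg_nonneg.2 (hv.eV_nonpos s a))
  linarith [h]

end Occupancy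

section Lagrangian

variable {P : S → A → S → ℝ} {r : S → A → ℝ} {μ0 : S → ℝ} {γ : ℝ} {dD : S → A → ℝ}

/-- The single-transition summand of the unregularized empirical Lagrangian. -/
noncomputable def tdSummand (r : S → A → ℝ) (γ : ℝ) (v : S → ℝ) (w : S → A → ℝ)
    (x : (S × A) × S) : ℝ :=
  w x.1.1 x.1.2 * (r x.1.1 x.1.2 + γ * v x.2 - v x.1.1)

lemma tupleWeight_nonneg (hM : MDPAssumptions P r μ0 γ dD) (x : (S × A) × S) :
    0 ≤ tupleWeight P dD x :=
  mul_nonneg (hM.dD_nonneg _ _) (hM.P_nonneg _ _ _)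

lemma sum_tupleWeight (hM : MDPAssumptions P r μ0 γ dD) :
    ∑ x : (S × A) × S, tupleWeight P dD x = 1 := by
  simp only [Fintype.sum_prod_type, tupleWeight, ← Finset.mul_sum, hM.P_sum, mul_one, hM.dD_sum]

lemma sum_tupleWeight_mul_tdSummand (hM : MDPAssumptions P r μ0 γ dD) (v : S → ℝ)
    (w : S → A → ℝ) :
    ∑ x : (S × A) × S, tupleWeight P dD x * tdSummand r γ v w x
      = ∑ s, ∑ a, dD s a * (w s a * eV P r γ v s a) := by
  simp only [Fintype.sum_prod_type, tupleWeight, tdSummand]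
  refine Finset.sum_congr rfl fun s _ => Finset.sum_congr rfl fun a _ => ?_
  have hexp : ∀ s', dD s a * P s a s' * (w s a * (r s a + γ * v s' - v s))
      = dD s a * w s a * (r s a - v s) * P s a s' + dD s a * w s a * γ * (P s a s' * v s') :=
    fun s' => by ring
  simp only [hexp, Finset.sum_add_distrib, ← Finset.mul_sum, hM.P_sum, eV]
  ring

lemma tdSummand_mem_Icc (hM : MDPAssumptions P r μ0 γ dD) {B : ℝ} {v : S → ℝ}
    {w : S → A → ℝ} (hv : ∀ s, 0 ≤ v s ∧ v s ≤ 1 / (1 - γ))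
    (hw : ∀ s a, 0 ≤ w s a ∧ w s a ≤ B) (x : (S × A) × S) :
    tdSummand r γ v w x ∈ Set.Icc (-(B / (1 - γ))) (B / (1 - γ)) := by
  have hγ : 0 < 1 - γ := by linarith [hM.γ_lt_one]
  obtain ⟨hw0, hwB⟩ := hw x.1.1 x.1.2
  obtain ⟨hv0, hv1⟩ := hv x.1.1
  obtain ⟨hu0, hu1⟩ := hv x.2
  have hγu : γ * v x.2 ≤ γ * (1 / (1 - γ)) := mul_le_mul_of_nonneg_left hu1 hM.γ_nonneg
  have hγu0 : 0 ≤ γ * v x.2 := mul_nonneg hM.γ_nonneg hu0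
  have hid : 1 + γ * (1 / (1 - γ)) = 1 / (1 - γ) := by
    field_simp
    ring
  have habs : |r x.1.1 x.1.2 + γ * v x.2 - v x.1.1| ≤ 1 / (1 - γ) :=
    abs_le.2 ⟨by linarith [hM.r_nonneg x.1.1 x.1.2], by linarith [hM.r_le_one x.1.1 x.1.2]⟩
  rw [Set.mem_Icc, ← abs_le, tdSummand, abs_mul, abs_of_nonneg hw0, div_eq_mul_one_div]
  exact mul_le_mul hwB habs (abs_nonneg _) (hw0.trans hwB)

lemma empLag_zero {S A : Type*} {r : S → A → ℝ} (f : ℝ → ℝ) {n n0 : ℕ}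
    (D : Fin n → (S × A) × S) (D0 : Fin n0 → S)
    (v : S → ℝ) (w : S → A → ℝ) :
    empLag r γ f 0 D D0 v w = (1 - γ) * ((n0 : ℝ)⁻¹ * ∑ j, v (D0 j))
      + (n : ℝ)⁻¹ * ∑ i, tdSummand r γ v w (D i) := by
  simp only [empLag, tdSummand, zero_mul, sub_zero]

/-- On the event of uniform concentration, the population Lagrangian gap of the empirical
max-min weight is at most twice the uniform deviation. -/
lemma lagrangian_gap_le (hM : MDPAssumptions P r μ0 γ dD) {f : ℝ → ℝ}
    {V : Finset (S → ℝ)} {W : Finset (S → A → ℝ)} {v0 : S → ℝ} {w0 : S → A → ℝ}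
    (hv0 : v0 ∈ V) (hw0 : w0 ∈ W) (hflow : BellmanFlow P μ0 γ fun s a => w0 s a * dD s a)
    {n n0 : ℕ} {D : Fin n → (S × A) × S} {D0 : Fin n0 → S} {ε0 ε1 : ℝ}
    (h0 : ∀ v ∈ V, |(n0 : ℝ)⁻¹ * ∑ j, v (D0 j) - ∑ s, μ0 s * v s| ≤ ε0)
    (h1 : ∀ v ∈ V, ∀ w ∈ W, |(n : ℝ)⁻¹ * ∑ i, tdSummand r γ v w (D i)
      - ∑ s, ∑ a, dD s a * (w s a * eV P r γ v s a)| ≤ ε1)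
    {vhat : S → ℝ} {what : S → A → ℝ}
    (hout : IsProRLOutput r γ f 0 V W D D0 vhat what) :
    ∑ s, ∑ a, w0 s a * dD s a * r s a
      ≤ (1 - γ) * ∑ s, μ0 s * v0 s
        + ∑ s, ∑ a, dD s a * (what s a * eV P r γ v0 s a) + 2 * ((1 - γ) * ε0 + ε1) := by
  have hγ : 0 < 1 - γ := by linarith [hM.γ_lt_one]
  obtain ⟨-, hwhat, hmin, hmax⟩ := hout
  have hdev : ∀ v ∈ V, ∀ w ∈ W, |empLag r γ f 0 D D0 v w - ((1 - γ) * ∑ s, μ0 s * v s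
      + ∑ s, ∑ a, dD s a * (w s a * eV P r γ v s a))| ≤ (1 - γ) * ε0 + ε1 := by
    intro v hv w hw
    rw [empLag_zero, add_sub_add_comm, ← mul_sub]
    refine (abs_add_le _ _).trans (add_le_add ?_ (h1 v hv w hw))
    rw [abs_mul, abs_of_pos hγ]
    exact mul_le_mul_of_nonneg_left (h0 v hv) hγ.le
  obtain ⟨u, hu, humin⟩ := V.exists_min_image (fun v => empLag r γ f 0 D D0 v w0) ⟨v0, hv0⟩
  have hval := sum_mul_eV_of_bellmanFlow (r := r) hflow u
  have hcomm : ∑ s, ∑ a, w0 s a * dD s a * eV P r γ u s a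
      = ∑ s, ∑ a, dD s a * (w0 s a * eV P r γ u s a) :=
    Finset.sum_congr rfl fun s _ => Finset.sum_congr rfl fun a _ => by ring
  rw [hcomm] at hval
  have hleft := (abs_le.1 (hdev u hu w0 hw0)).1
  have hright := (abs_le.1 (hdev v0 hv0 what hwhat)).2
  have hmid := (hmax w0 hw0 u hu humin).trans (hmin v0 hv0)
  linarith

end Lagrangian

/-- Corollary 7: PRO-RL with `α = 0` under strong concentrability. -/
theorem stmt10
    {S A : Type*} [Fintype S] [Fintype A] [Nonempty S] [Nonempty A]
    [MeasurableSpace S] [MeasurableSpace A]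
    [MeasurableSingletonClass S] [MeasurableSingletonClass A]
    (P : S → A → S → ℝ) (r : S → A → ℝ) (μ0 : S → ℝ) (γ : ℝ) (dD : S → A → ℝ)
    (hMDP : MDPAssumptions P r μ0 γ dD)
    (f : ℝ → ℝ) (δ : ℝ) (hδ0 : 0 < δ) (hδ1 : δ < 1)
    (Bw0 Bwu Bwl : ℝ) (hBwl : 0 < Bwl)
    -- π*₀ is an optimal policy with occupancy d*₀
    (π0 : S → A → ℝ) (hπ0 : IsPolicy π0)
    (hopt : ∀ π : S → A → ℝ, IsPolicy π → Jret P r μ0 γ π ≤ Jret P r μ0 γ π0)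
    -- strong concentrability: d^π(s)/d^D(s) ≤ B_{w,u} for all π, d*₀(s)/d^D(s) ≥ B_{w,l}
    (hconc1 : ∀ π : S → A → ℝ, IsPolicy π → ∀ s,
      (∑ a : A, occ P μ0 γ π s a) ≤ Bwu * ∑ a : A, dD s a)
    (hconc2 : ∀ s, Bwl * (∑ a : A, dD s a) ≤ ∑ a : A, occ P μ0 γ π0 s a)
    -- coverage of d*₀ and realizability of (v*₀, w*₀)
    (hA1 : ∀ s a, occ P μ0 γ π0 s a ≤ Bw0 * dD s a)
    (v0 : S → ℝ) (hv0 : IsOptValue P r γ v0)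
    (w0 : S → A → ℝ) (hw0 : ∀ s a, occ P μ0 γ π0 s a = w0 s a * dD s a)
    (V : Finset (S → ℝ)) (W : Finset (S → A → ℝ))
    (hA2 : v0 ∈ V) (hA3 : w0 ∈ W)
    (hA4 : ∀ w ∈ W, ∀ s a, 0 ≤ w s a ∧ w s a ≤ Bw0)
    -- W good: Σ_a π_D(a|s) w(s,a) ≥ B_{w,l}
    (hWgood : ∀ w ∈ W, ∀ s, Bwl ≤ ∑ a : A, behPolicy dD s a * w s a)
    -- V good: 0 ≤ v ≤ 1/(1−γ)
    (hVgood : ∀ v ∈ V, ∀ s, 0 ≤ v s ∧ v s ≤ 1 / (1 - γ))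
    (n n0 : ℕ) (hn : 0 < n) (hn0 : 0 < n0)
    (vhat : (Fin n → (S × A) × S) × (Fin n0 → S) → S → ℝ)
    (what : (Fin n → (S × A) × S) × (Fin n0 → S) → S → A → ℝ)
    -- PRO-RL with input α = 0
    (halg : ∀ ω, IsProRLOutput r γ f 0 V W ω.1 ω.2 (vhat ω) (what ω)) :
    1 - ENNReal.ofReal δ ≤
      dataMeasure P dD μ0 n n0 {ω |
        Jret P r μ0 γ π0 - Jret P r μ0 γ (extractPolicy (behPolicy dD) (what ω))
          ≤ 2 * Bw0 * Bwu / ((1 - γ) * Bwl) *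
              Real.sqrt (2 * Real.log (4 * ((V.card : ℝ) * (W.card : ℝ)) / δ) / (n : ℝ))
            + Bwu / Bwl *
              Real.sqrt (2 * Real.log (4 * (V.card : ℝ) / δ) / (n0 : ℝ)) } := by
  have hγ : 0 < 1 - γ := by linarith [hMDP.γ_lt_one]
  obtain ⟨s₁⟩ := ‹Nonempty S›
  have hpos₁ := (sum_occ_pos hMDP hπ0 s₁).trans_le (hconc1 π0 hπ0 s₁)
  have hBwu : 0 ≤ Bwu :=
    (pos_of_mul_pos_left hpos₁ (Finset.sum_nonneg fun a _ => hMDP.dD_nonneg s₁ a)).le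
  have hBw0 : 0 < Bw0 := by
    have h : 0 < Bw0 * ∑ a, dD s₁ a := by
      rw [Finset.mul_sum]
      exact (sum_occ_pos hMDP hπ0 s₁).trans_le (Finset.sum_le_sum fun a _ => hA1 s₁ a)
    exact pos_of_mul_pos_left h (Finset.sum_nonneg fun a _ => hMDP.dD_nonneg s₁ a)
  have := isProbabilityMeasure_discMeasure (tupleWeight P dD) (tupleWeight_nonneg hMDP)
    (sum_tupleWeight hMDP)
  have := isProbabilityMeasure_discMeasure μ0 (fun s => (hMDP.μ0_pos s).le) hMDP.μ0_sum
  have hconcInit := uniform_hoeffding (discMeasure μ0) V ⟨v0, hA2⟩ (g := fun v s => v s)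
    (fun _ => Measurable.of_discrete) (one_div_pos.2 hγ) hVgood hn0 hδ0 hδ1
  have hconcTrans := uniform_hoeffding (discMeasure (tupleWeight P dD)) (V ×ˢ W)
    ⟨(v0, w0), Finset.mk_mem_product hA2 hA3⟩ (g := fun k => tdSummand r γ k.1 k.2)
    (fun _ => Measurable.of_discrete)
    (a := -(Bw0 / (1 - γ))) (b := Bw0 / (1 - γ))
    (neg_lt_self (div_pos hBw0 hγ))
    (fun k hk => tdSummand_mem_Icc hMDP (hVgood _ (Finset.mem_product.1 hk).1)
      (hA4 _ (Finset.mem_product.1 hk).2)) hn hδ0 hδ1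
  simp only [integral_discMeasure _ (fun s => (hMDP.μ0_pos s).le) hMDP.μ0_sum] at hconcInit
  simp only [integral_discMeasure _ (tupleWeight_nonneg hMDP) (sum_tupleWeight hMDP),
    sum_tupleWeight_mul_tdSummand hMDP, Finset.card_product, Nat.cast_mul] at hconcTrans
  set ε0 := (1 / (1 - γ) - 0) / 2 * Real.sqrt (2 * Real.log (4 * (V.card : ℝ) / δ) / (n0 : ℝ))
    with hε0
  set ε1 := (Bw0 / (1 - γ) - -(Bw0 / (1 - γ))) / 2 *
    Real.sqrt (2 * Real.log (4 * ((V.card : ℝ) * (W.card : ℝ)) / δ) / (n : ℝ)) with hε1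
  set badInit := {x : Fin n0 → S | ∃ v ∈ V,
    ε0 < |(n0 : ℝ)⁻¹ * ∑ j, v (x j) - ∑ s, μ0 s * v s|} with hbadInit
  set badTrans := {x : Fin n → (S × A) × S | ∃ k ∈ V ×ˢ W,
    ε1 < |(n : ℝ)⁻¹ * ∑ i, tdSummand r γ k.1 k.2 (x i)
      - ∑ s, ∑ a, dD s a * (k.2 s a * eV P r γ k.1 s a)|} with hbadTrans
  set good := {ω : (Fin n → (S × A) × S) × (Fin n0 → S) |
    Jret P r μ0 γ π0 - Jret P r μ0 γ (extractPolicy (behPolicy dD) (what ω))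
      ≤ 2 * Bw0 * Bwu / ((1 - γ) * Bwl) *
          Real.sqrt (2 * Real.log (4 * ((V.card : ℝ) * (W.card : ℝ)) / δ) / (n : ℝ))
        + Bwu / Bwl * Real.sqrt (2 * Real.log (4 * (V.card : ℝ) / δ) / (n0 : ℝ))} with hgood
  have hflow : BellmanFlow P μ0 γ fun s a => w0 s a * dD s a := by
    simpa only [← hw0] using bellmanFlow_occ hMDP hπ0
  have hJ0 : Jret P r μ0 γ π0 = ∑ s, ∑ a, w0 s a * dD s a * r s a := by
    simp only [Jret, hw0]
  have hJv := Jret_eq_of_optimal hMDP hπ0 hopt hv0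
  have hcover : (Set.univ : Set ((Fin n → (S × A) × S) × (Fin n0 → S)))
      ⊆ good ∪ (badTrans ×ˢ Set.univ ∪ Set.univ ×ˢ badInit) := by
    rintro ω -
    by_cases hT : ω.1 ∈ badTrans
    · exact Or.inr (Or.inl ⟨hT, trivial⟩)
    by_cases hI : ω.2 ∈ badInit
    · exact Or.inr (Or.inr ⟨trivial, hI⟩)
    refine Or.inl ?_
    simp only [hbadInit, Set.mem_ofPred_eq, not_exists, not_and, not_lt] at hI
    simp only [hbadTrans, Set.mem_ofPred_eq, not_exists, not_and, not_lt] at hT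
    have hwhat := (halg ω).2.1
    have hgap := lagrangian_gap_le hMDP hA2 hA3 hflow hI
      (fun v hv w hw => hT (v, w) (Finset.mk_mem_product hv hw)) (halg ω)
    have hsub := suboptimality_le hMDP hBwl hconc1 hv0 (fun s a => (hA4 _ hwhat s a).1)
      (hWgood _ hwhat)
    rw [← hJ0, hJv] at hgap
    rw [hgood, Set.mem_ofPred_eq, hJv]
    refine hsub.trans ((mul_le_mul_of_nonneg_left (show _ ≤ 2 * ((1 - γ) * ε0 + ε1) by linarith)
      (div_nonneg hBwu hBwl.le)).trans (le_of_eq ?_))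
    rw [hε0, hε1]
    field_simp
    ring
  have hmeas : 1 ≤ dataMeasure P dD μ0 n n0 good + ENNReal.ofReal δ := by
    calc 1 = dataMeasure P dD μ0 n n0 Set.univ := by
          rw [dataMeasure, measure_univ]
      _ ≤ dataMeasure P dD μ0 n n0 good + (dataMeasure P dD μ0 n n0 (badTrans ×ˢ Set.univ)
          + dataMeasure P dD μ0 n n0 (Set.univ ×ˢ badInit)) :=
        (measure_mono hcover).trans ((measure_union_le _ _).trans
          (add_le_add le_rfl (measure_union_le _ _)))
      _ ≤ dataMeasure P dD μ0 n n0 good + ENNReal.ofReal δ := by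
        refine add_le_add le_rfl ?_
        rw [dataMeasure, Measure.prod_prod, Measure.prod_prod, measure_univ, measure_univ,
          mul_one, one_mul]
        refine (add_le_add hconcTrans hconcInit).trans (le_of_eq ?_)
        rw [← ENNReal.ofReal_add (by positivity) (by positivity), add_halves]
  exact tsub_le_iff_right.2 hmeas
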